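/- Let φ : ℝⁿ → ℝᵐ be a C^∞ map, let a ∈ ℝⁿ, and let V ⊆ ℝⁿ be an open set containing a. Then for every ε > 0 and all integers 0 ≤ k ≤ l there exists δ > 0 with the following property: for every C^∞ map ψ : ℝⁿ → ℝᵐ satisfying ‖D^i ψ(a) − D^i φ(a)‖ < δ for all 0 ≤ i ≤ k, there exists a C^∞ map φ̃ : ℝⁿ → ℝᵐ such that (i) D^i φ̃(a) = D^i ψ(a) for all 0 ≤ i ≤ k, (ii) φ̃(x) = φ(x) for all x ∈ ℝⁿ \ V, and (iii) sup_{x ∈ ℝⁿ} ‖D^i (φ̃ − φ)(x)‖ < ε for all 0 ≤ i ≤ l. -/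

import Mathlib

/-!
Taking the `k`-jet at `a` is a linear map from the test functions supported in a compact
neighbourhood `K ⊆ V` of `a` to a finite-dimensional space, so it is open onto its range: every
small jet in the range is attained by a test function that is small in the `C^l` norm. Multiplying
by a cutoff shows that the range contains the jets of all smooth maps, in particular the jet of
`ψ - φ`; the test function attaining it is the required perturbation `φt - φ`.
-/

open Filter Topology TopologicalSpace
open scoped Distributions

section LinearAlgebra

instance finiteDimensional_continuousMultilinearMap {𝕜 ι G : Type*} {E : ι → Type*} [Finite ι]
    [Field 𝕜] [∀ i, AddCommGroup (E i)] [∀ i, Module 𝕜 (E i)] [∀ i, TopologicalSpace (E i)]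
    [∀ i, FiniteDimensional 𝕜 (E i)] [AddCommGroup G] [Module 𝕜 G] [TopologicalSpace G]
    [IsTopologicalAddGroup G] [ContinuousConstSMul 𝕜 G] [FiniteDimensional 𝕜 G] :
    FiniteDimensional 𝕜 (ContinuousMultilinearMap 𝕜 E G) :=
  .of_injective (ContinuousMultilinearMap.toMultilinearMapLinear (R' := 𝕜) (A := 𝕜))
    ContinuousMultilinearMap.toMultilinearMap_injective

theorem image_mem_nhdsWithin_range {𝕜 X Y : Type*} [NontriviallyNormedField 𝕜] [CompleteSpace 𝕜]
    [AddCommGroup X] [Module 𝕜 X] [TopologicalSpace X] [IsTopologicalAddGroup X]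
    [ContinuousSMul 𝕜 X] [AddCommGroup Y] [Module 𝕜 Y] [TopologicalSpace Y]
    [IsTopologicalAddGroup Y] [ContinuousSMul 𝕜 Y] [T2Space Y] [FiniteDimensional 𝕜 Y]
    (f : X →ₗ[𝕜] Y) {x : X} {U : Set X} (hU : U ∈ 𝓝 x) :
    f '' U ∈ 𝓝[Set.range f] f x := by
  have hopen : IsOpenMap f.rangeRestrict :=
    f.rangeRestrict.isOpenMap_of_finiteDimensional f.surjective_rangeRestrict
  have hmem : Subtype.val '' (f.rangeRestrict '' U) ∈ 𝓝[(f.range : Set Y)] f x :=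
    mem_nhds_subtype_iff_nhdsWithin.1 (hopen.image_mem_nhds hU)
  rwa [Set.image_image, f.coe_range] at hmem

end LinearAlgebra

section TestFunctions

variable {E F : Type*} [NormedAddCommGroup E] [NormedSpace ℝ E]
  [NormedAddCommGroup F] [NormedSpace ℝ F] {N : ℕ∞} {K : Compacts E} {a : E}

theorem eventually_norm_iteratedFDeriv_lt {i : ℕ} (hi : i ≤ N) {ε : ℝ} (hε : 0 < ε) :
    ∀ᶠ f : 𝓓^{N}_{K}(E, F) in 𝓝 0, ∀ x, ‖iteratedFDeriv ℝ i f x‖ < ε := by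
  have hcont : Continuous (N[ℝ; F]_{K, N, i}) :=
    (ContDiffMapSupportedIn.withSeminorms ℝ E F N K).continuous_seminorm i
  filter_upwards [hcont.tendsto' 0 0 (map_zero _) |>.eventually_lt_const hε] with f hf x
  exact (ContDiffMapSupportedIn.norm_iteratedFDeriv_apply_le_seminorm ℝ hi).trans_lt hf

theorem exists_testFunction_eventuallyEq [HasContDiffBump E] (hK : (K : Set E) ∈ 𝓝 a) {g : E → F}
    (hg : ContDiff ℝ N g) :
    ∃ f : 𝓓^{N}_{K}(E, F), f =ᶠ[𝓝 a] g := by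
  obtain ⟨r, hr, hrK⟩ := Metric.nhds_basis_closedBall.mem_iff.1 hK
  let χ : ContDiffBump a := ⟨r / 2, r, half_pos hr, half_lt_self hr⟩
  have hsupp : Function.support (fun x ↦ χ x • g x) ⊆ K :=
    (Function.support_smul_subset_left ..).trans <|
      χ.support_eq.trans_subset <| Metric.ball_subset_closedBall.trans hrK
  refine ⟨.of_support_subset (χ.contDiff.smul hg) hsupp, ?_⟩
  filter_upwards [χ.eventuallyEq_one] with x hx
  change χ x • g x = g x
  rw [hx, Pi.one_apply, one_smul]

/-- The linear map sending a test function of class `C^N` to its `k`-jet at `a`; its openness onto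
its range yields small test functions with a prescribed small jet. A jet is encoded as the family
of derivatives of order at most `k`, those of order greater than `N` being replaced by `0`. -/
noncomputable def jetLM (F : Type*) [NormedAddCommGroup F] [NormedSpace ℝ F] (N : ℕ∞)
    (K : Compacts E) (k : ℕ) (a : E) :
    𝓓^{N}_{K}(E, F) →ₗ[ℝ] ∀ i : Set.Iic k, E [×i]→L[ℝ] F :=
  .pi fun i ↦ (BoundedContinuousFunction.evalCLM ℝ a).toLinearMap ∘ₗ
    ContDiffMapSupportedIn.structureMapLM ℝ N i

theorem jetLM_apply {k : ℕ} (hk : k ≤ N) (f : 𝓓^{N}_{K}(E, F)) (i : Set.Iic k) :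
    jetLM F N K k a f i = iteratedFDeriv ℝ i f a := by
  have hi : (i : ℕ) ≤ N := (Nat.cast_le.2 i.2).trans hk
  change ContDiffMapSupportedIn.structureMapLM ℝ N i f a = _
  rw [ContDiffMapSupportedIn.structureMapLM_apply, if_pos hi]

variable [FiniteDimensional ℝ E] [FiniteDimensional ℝ F]

theorem exists_testFunction_iteratedFDeriv_eq (hK : (K : Set E) ∈ 𝓝 a) {k l : ℕ} (hk : k ≤ N)
    (hl : l ≤ N) {ε : ℝ} (hε : 0 < ε) :
    ∃ δ > 0, ∀ g : E → F, ContDiff ℝ N g → (∀ i ≤ k, ‖iteratedFDeriv ℝ i g a‖ < δ) →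
      ∃ f : 𝓓^{N}_{K}(E, F), (∀ i ≤ k, iteratedFDeriv ℝ i f a = iteratedFDeriv ℝ i g a) ∧
        ∀ i ≤ l, ∀ x, ‖iteratedFDeriv ℝ i f x‖ < ε := by
  have hsmall : ∀ᶠ f : 𝓓^{N}_{K}(E, F) in 𝓝 0, ∀ i ≤ l, ∀ x, ‖iteratedFDeriv ℝ i f x‖ < ε :=
    (eventually_all_finite (Set.finite_Iic l)).2 fun i hi ↦
      eventually_norm_iteratedFDeriv_lt ((Nat.cast_le.2 hi).trans hl) hε
  obtain ⟨δ, hδ, hball⟩ := Metric.mem_nhdsWithin_iff.1 <|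
    image_mem_nhdsWithin_range (jetLM F N K k a) hsmall
  refine ⟨δ, hδ, fun g hg hgδ ↦ ?_⟩
  obtain ⟨g₀, hg₀⟩ := exists_testFunction_eventuallyEq hK hg
  have hjet (i : Set.Iic k) : jetLM F N K k a g₀ i = iteratedFDeriv ℝ i g a :=
    (jetLM_apply hk g₀ i).trans (hg₀.iteratedFDeriv ℝ i).eq_of_nhds
  have hg₀_lt : jetLM F N K k a g₀ ∈ Metric.ball (jetLM F N K k a 0) δ := by
    rw [map_zero, mem_ball_zero_iff, pi_norm_lt_iff hδ]
    exact fun i ↦ (hjet i).symm ▸ hgδ i i.2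
  obtain ⟨f, hf, hfg⟩ := hball ⟨hg₀_lt, Set.mem_range_self g₀⟩
  refine ⟨f, fun i hi ↦ ?_, hf⟩
  rw [← jetLM_apply hk f ⟨i, hi⟩, hfg, hjet]

end TestFunctions

theorem perturb_jet_general {E F : Type*} [NormedAddCommGroup E] [NormedSpace ℝ E]
    [FiniteDimensional ℝ E] [NormedAddCommGroup F] [NormedSpace ℝ F] [FiniteDimensional ℝ F]
    {N : ℕ∞} {φ : E → F} (hφ : ContDiff ℝ N φ) {a : E} {V : Set E} (hV : V ∈ 𝓝 a)
    {ε : ℝ} (hε : 0 < ε) {k l : ℕ} (hk : k ≤ N) (hl : l ≤ N) :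
    ∃ δ > (0 : ℝ), ∀ ψ : E → F, ContDiff ℝ N ψ →
      (∀ i ≤ k, ‖iteratedFDeriv ℝ i ψ a - iteratedFDeriv ℝ i φ a‖ < δ) →
      ∃ φt : E → F, ContDiff ℝ N φt ∧
        (∀ i ≤ k, iteratedFDeriv ℝ i φt a = iteratedFDeriv ℝ i ψ a) ∧
        (∀ x ∉ V, φt x = φ x) ∧
        (∀ i ≤ l, ∀ x, ‖iteratedFDeriv ℝ i (fun y ↦ φt y - φ y) x‖ < ε) := by
  have : ProperSpace E := FiniteDimensional.proper_real E
  obtain ⟨K, hKa, hKV, hK⟩ := local_compact_nhds hV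
  obtain ⟨δ, hδ, hjet⟩ := exists_testFunction_iteratedFDeriv_eq (F := F) (K := ⟨K, hK⟩) hKa
    hk hl hε
  refine ⟨δ, hδ, fun ψ hψ hψφ ↦ ?_⟩
  have contDiffAt_a {g : E → F} (hg : ContDiff ℝ N g) {i : ℕ} (hi : i ≤ k) : ContDiffAt ℝ i g a :=
    hg.contDiffAt.of_le (mod_cast (Nat.cast_le.2 hi).trans hk)
  have hsub {i : ℕ} (hi : i ≤ k) :
      iteratedFDeriv ℝ i (ψ - φ) a = iteratedFDeriv ℝ i ψ a - iteratedFDeriv ℝ i φ a :=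
    iteratedFDeriv_sub_apply (contDiffAt_a hψ hi) (contDiffAt_a hφ hi)
  obtain ⟨f, hfa, hfε⟩ := hjet (ψ - φ) (hψ.sub hφ) fun i hi ↦ by
    simpa only [hsub hi] using hψφ i hi
  refine ⟨φ + f, hφ.add f.contDiff, fun i hi ↦ ?_, fun x hx ↦ ?_, fun i hi x ↦ ?_⟩
  · rw [iteratedFDeriv_add_apply (contDiffAt_a hφ hi) (contDiffAt_a f.contDiff hi), hfa i hi,
      hsub hi, add_sub_cancel]
  · rw [Pi.add_apply, f.zero_on_compl fun hxK ↦ hx (hKV hxK), Pi.zero_apply, add_zero]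
  · simpa only [Pi.add_apply, add_sub_cancel_left] using hfε i hi x

/-- **Jet perturbation lemma** (Lemma 2.4 of Kim–Zaitsev, "Remarks on the rigidity of
CR-manifolds"). Let `φ : ℝⁿ → ℝᵐ` be a `C^∞` map, `a ∈ ℝⁿ`, and `V` an open set
containing `a`. For every `ε > 0` and integers `0 ≤ k ≤ l` there is `δ > 0` such that
any `k`-jet at `a` within distance `δ` of the `k`-jet of `φ` (represented here by a
smooth map `ψ` whose derivatives at `a` up to order `k` are `δ`-close to those of `φ`)
is realized by a smooth map `φ̃` agreeing with `φ` outside `V` and `ε`-close to `φ`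
in the `C^l` norm. -/
theorem perturb_jet
    (n m : ℕ) (φ : EuclideanSpace ℝ (Fin n) → EuclideanSpace ℝ (Fin m))
    (hφ : ContDiff ℝ (⊤ : ℕ∞) φ)
    (a : EuclideanSpace ℝ (Fin n)) (V : Set (EuclideanSpace ℝ (Fin n)))
    (hV : IsOpen V) (haV : a ∈ V)
    (ε : ℝ) (hε : 0 < ε) (k l : ℕ) (hkl : k ≤ l) :
    ∃ δ > (0 : ℝ),
      ∀ ψ : EuclideanSpace ℝ (Fin n) → EuclideanSpace ℝ (Fin m),
        ContDiff ℝ (⊤ : ℕ∞) ψ →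
        (∀ i ≤ k, ‖iteratedFDeriv ℝ i ψ a - iteratedFDeriv ℝ i φ a‖ < δ) →
        ∃ φt : EuclideanSpace ℝ (Fin n) → EuclideanSpace ℝ (Fin m),
          ContDiff ℝ (⊤ : ℕ∞) φt ∧
          (∀ i ≤ k, iteratedFDeriv ℝ i φt a = iteratedFDeriv ℝ i ψ a) ∧
          (∀ x ∉ V, φt x = φ x) ∧
          (∀ i ≤ l, ∀ x, ‖iteratedFDeriv ℝ i (fun y => φt y - φ y) x‖ < ε) :=
  perturb_jet_general hφ (hV.mem_nhds haV) hε le_top le_top
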